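/- Let B = A + Aᵀ − α Aᵀ A, where A = X (X − γY)ᵀ. Then for every step size α ∈ (0, (1−γ)/(1+γ)²] and every integer p ≥ 1, E[B^p] ≼ (13/12) · 4^p · Σ in the Loewner order. -/

import Mathlib

open MeasureTheory ProbabilityTheory Matrix
noncomputable section

/-- Euclidean norm of a vector in `ℝ^d`. -/
def euclNorm {d : ℕ} (u : Fin d → ℝ) : ℝ := Real.sqrt (∑ i, u i ^ 2)

/-- Entrywise expectation of a random matrix. -/
def matExp {d : ℕ} {Ω : Type*} [MeasurableSpace Ω] (P : Measure Ω)
    (M : Ω → Matrix (Fin d) (Fin d) ℝ) : Matrix (Fin d) (Fin d) ℝ :=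
  Matrix.of fun i j => ∫ ω, M ω i j ∂P

/-!
With `z = x - γ y` one has `B v = (z·v) x + (x·v - α |x|² (z·v)) z`, and the bound on the step size
turns this into `|B v| ≤ 3 |x·v| + |y·v|`. Hence `‖B‖ ≤ 4` and, by convexity of the square,
`B² ≼ 4 (3 x xᵀ + y yᵀ)`. Since `B^(m+2) = B B^m B ≼ ‖B‖^m B²`, all powers from the second on
satisfy `B^(m+1) ≼ 4^m (3 x xᵀ + y yᵀ)`; the first does so by completing squares. Taking
expectations and using `E[Y Yᵀ] = E[X Xᵀ] = Σ` gives `E[B^p] ≼ 4^p Σ`, without the factor `13/12`.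
-/

open WithLp (toLp)
open scoped MatrixOrder Matrix.Norms.L2Operator

section LoewnerOrder

variable {n : Type*}

section Finite

variable [Finite n]

theorem vecMulVec_self_nonneg (u : n → ℝ) : 0 ≤ vecMulVec u u :=
  (posSemidef_vecMulVec_self_star u).nonneg

theorem isClosed_setOf_posSemidef : IsClosed {M : Matrix n n ℝ | M.PosSemidef} := by
  have := Fintype.ofFinite n
  simp only [posSemidef_iff_dotProduct_mulVec, Set.ofPred_and, Set.ofPred_forall]
  exact (isClosed_eq (by fun_prop) (by fun_prop)).inter
    (isClosed_iInter fun v => isClosed_le (by fun_prop) (by fun_prop))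

instance instClosedIciTopologyLoewner : ClosedIciTopology (Matrix n n ℝ) where
  isClosed_Ici _ := isClosed_setOf_posSemidef.preimage (continuous_id.sub continuous_const)

end Finite

variable [Fintype n]

theorem dotProduct_self_eq_norm_sq (u : n → ℝ) : u ⬝ᵥ u = ‖toLp 2 u‖ ^ 2 := by
  rw [EuclideanSpace.real_norm_sq_eq]
  simp only [dotProduct, sq]

theorem abs_dotProduct_le_norm_mul_norm (u v : n → ℝ) :
    |u ⬝ᵥ v| ≤ ‖toLp 2 u‖ * ‖toLp 2 v‖ := by
  simpa [EuclideanSpace.inner_toLp_toLp, dotProduct_comm] using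
    abs_real_inner_le_norm (toLp 2 u) (toLp 2 v)

theorem dotProduct_vecMulVec_self_mulVec (u v : n → ℝ) :
    v ⬝ᵥ (vecMulVec u u *ᵥ v) = (u ⬝ᵥ v) ^ 2 := by
  rw [vecMulVec_mulVec, op_smul_eq_smul, dotProduct_smul, smul_eq_mul, dotProduct_comm v, sq]

variable [DecidableEq n]

theorem l2_opNorm_vecMulVec (u v : n → ℝ) : ‖vecMulVec u v‖ = ‖toLp 2 u‖ * ‖toLp 2 v‖ := by
  have hrank := InnerProductSpace.symm_toEuclideanLin_rankOne (𝕜 := ℝ) (toLp 2 u) (toLp 2 v)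
  rw [LinearEquiv.symm_apply_eq] at hrank
  change ‖LinearMap.toContinuousLinearMap (toEuclideanLin (vecMulVec u (star v)))‖ = _
  rw [← hrank]
  exact InnerProductSpace.norm_rankOne _ _

theorem le_l2_opNorm_smul_one {M : Matrix n n ℝ} (hM : M.IsHermitian) : M ≤ ‖M‖ • 1 := by
  cases isEmpty_or_nonempty n
  · exact (Subsingleton.elim _ _).le
  rw [← Algebra.algebraMap_eq_smul_one]
  exact le_algebraMap_of_spectrum_le
    (fun r hr => (le_abs_self r).trans (spectrum.norm_le_norm_of_mem hr)) hM

theorem pow_add_two_le_l2_opNorm_pow_smul_sq {M : Matrix n n ℝ} (hM : M.IsHermitian) (m : ℕ) :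
    M ^ (m + 2) ≤ ‖M‖ ^ m • M ^ 2 := by
  rcases m.eq_zero_or_pos with rfl | hm
  · simp
  calc M ^ (m + 2) = star M * M ^ m * M := by
        rw [show star M = M from hM, ← pow_succ', ← pow_succ]
    _ ≤ star M * (‖M ^ m‖ • 1) * M :=
        star_left_conjugate_le_conjugate (le_l2_opNorm_smul_one (hM.pow m)) M
    _ = ‖M ^ m‖ • M ^ 2 := by
        rw [show star M = M from hM, mul_smul_comm, mul_one, smul_mul_assoc, sq]
    _ ≤ ‖M‖ ^ m • M ^ 2 :=
        smul_le_smul_of_nonneg_right (norm_pow_le' M hm) (IsSelfAdjoint.sq_nonneg hM)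

variable {M : Matrix n n ℝ} {a b : ℝ} {x y : n → ℝ}

theorem l2_opNorm_le_of_norm_mulVec_le (ha : 0 ≤ a) (hb : 0 ≤ b)
    (h : ∀ v, ‖toLp 2 (M *ᵥ v)‖ ≤ a * |x ⬝ᵥ v| + b * |y ⬝ᵥ v|) :
    ‖M‖ ≤ a * ‖toLp 2 x‖ + b * ‖toLp 2 y‖ := by
  rw [cstar_norm_def]
  refine ContinuousLinearMap.opNorm_le_bound _ (by positivity) fun v => ?_
  calc ‖toLp 2 (M *ᵥ v.ofLp)‖ ≤ a * |x ⬝ᵥ v.ofLp| + b * |y ⬝ᵥ v.ofLp| := h v.ofLp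
    _ ≤ a * (‖toLp 2 x‖ * ‖v‖) + b * (‖toLp 2 y‖ * ‖v‖) := by
        gcongr <;> exact abs_dotProduct_le_norm_mul_norm _ _
    _ = (a * ‖toLp 2 x‖ + b * ‖toLp 2 y‖) * ‖v‖ := by ring

theorem sq_le_of_norm_mulVec_le (hM : M.IsHermitian) (ha : 0 ≤ a) (hb : 0 ≤ b)
    (h : ∀ v, ‖toLp 2 (M *ᵥ v)‖ ≤ a * |x ⬝ᵥ v| + b * |y ⬝ᵥ v|) :
    M ^ 2 ≤ (a + b) • (a • vecMulVec x x + b • vecMulVec y y) := by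
  have hS : 0 ≤ (a + b) • (a • vecMulVec x x + b • vecMulVec y y) :=
    smul_nonneg (add_nonneg ha hb) (add_nonneg (smul_nonneg ha (vecMulVec_self_nonneg x))
      (smul_nonneg hb (vecMulVec_self_nonneg y)))
  refine PosSemidef.of_dotProduct_mulVec_nonneg (hS.posSemidef.isHermitian.sub (hM.pow 2))
    fun v => ?_
  have hsq : v ⬝ᵥ (M ^ 2 *ᵥ v) = ‖toLp 2 (M *ᵥ v)‖ ^ 2 := by
    rw [← dotProduct_self_eq_norm_sq, sq, ← mulVec_mulVec, dotProduct_mulVec, ← mulVec_transpose,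
      ← conjTranspose_eq_transpose_of_trivial, hM.eq]
  simp only [star_trivial, sub_mulVec, smul_mulVec, add_mulVec, dotProduct_sub, dotProduct_smul,
    dotProduct_add, dotProduct_vecMulVec_self_mulVec, smul_eq_mul, hsq, sub_nonneg]
  calc ‖toLp 2 (M *ᵥ v)‖ ^ 2 ≤ (a * |x ⬝ᵥ v| + b * |y ⬝ᵥ v|) ^ 2 := by gcongr; exact h v
    _ = (a + b) * (a * (x ⬝ᵥ v) ^ 2 + b * (y ⬝ᵥ v) ^ 2)
          - a * b * (|x ⬝ᵥ v| - |y ⬝ᵥ v|) ^ 2 := by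
        rw [← sq_abs (x ⬝ᵥ v), ← sq_abs (y ⬝ᵥ v)]; ring
    _ ≤ (a + b) * (a * (x ⬝ᵥ v) ^ 2 + b * (y ⬝ᵥ v) ^ 2) := sub_le_self _ (by positivity)

end LoewnerOrder

section GramDefect

variable {n : Type*} [Fintype n]

/-- The symmetric matrix `B = A + Aᵀ - α Aᵀ A`, characterised for `α ≠ 0` by
`(1 - α A)ᵀ (1 - α A) = 1 - α B`: it measures how far one step of size `α` along `-A` is from
preserving the Euclidean norm. -/
def gramDefect (α : ℝ) (A : Matrix n n ℝ) : Matrix n n ℝ := A + Aᵀ - α • (Aᵀ * A)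

theorem isHermitian_gramDefect (α : ℝ) (A : Matrix n n ℝ) : (gramDefect α A).IsHermitian := by
  simp [IsHermitian, gramDefect, conjTranspose_eq_transpose_of_trivial, add_comm]

theorem gramDefect_le_add_transpose {α : ℝ} (hα : 0 ≤ α) (A : Matrix n n ℝ) :
    gramDefect α A ≤ A + Aᵀ :=
  sub_le_self _ (smul_nonneg hα (posSemidef_conjTranspose_mul_self A).nonneg)

theorem gramDefect_vecMulVec_mulVec (α : ℝ) (x z v : n → ℝ) :
    gramDefect α (vecMulVec x z) *ᵥ v
      = (z ⬝ᵥ v) • x + (x ⬝ᵥ v - α * (x ⬝ᵥ x) * (z ⬝ᵥ v)) • z := by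
  simp only [gramDefect, sub_mulVec, add_mulVec, smul_mulVec, ← mulVec_mulVec, transpose_vecMulVec,
    vecMulVec_mulVec, op_smul_eq_smul, dotProduct_smul, smul_eq_mul]
  module

end GramDefect

section TDMatrix

variable {n : Type*}

/-- The matrix `A = x (x - γ y)ᵀ` of the temporal-difference update with current feature vector
`x`, next feature vector `y` and discount factor `γ`. -/
def tdMatrix (γ : ℝ) (x y : n → ℝ) : Matrix n n ℝ := vecMulVec x (x - γ • y)

variable {γ α : ℝ} {x y : n → ℝ}

theorem le_one_of_mul_one_add_le_one (hγ : 0 ≤ γ) (hα : 0 ≤ α) (hγα : γ * (1 + α * (1 + γ)) ≤ 1) :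
    γ ≤ 1 :=
  (le_mul_of_one_le_right hγ (le_add_of_nonneg_right (by positivity))).trans hγα

theorem tdMatrix_add_transpose_le [Finite n] (hγ₀ : 0 ≤ γ) (hγ₁ : γ ≤ 1) :
    tdMatrix γ x y + (tdMatrix γ x y)ᵀ ≤ (3 : ℝ) • vecMulVec x x + vecMulVec y y := by
  have := Fintype.ofFinite n
  have hdiff : (3 : ℝ) • vecMulVec x x + vecMulVec y y - (tdMatrix γ x y + (tdMatrix γ x y)ᵀ)
      = (1 - γ) • (vecMulVec x x + vecMulVec y y) + γ • vecMulVec (x + y) (x + y) := by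
    ext i j
    simp [tdMatrix, vecMulVec_apply]
    ring
  rw [← sub_nonneg, hdiff]
  exact add_nonneg
    (smul_nonneg (sub_nonneg.2 hγ₁)
      (add_nonneg (vecMulVec_self_nonneg x) (vecMulVec_self_nonneg y)))
    (smul_nonneg hγ₀ (vecMulVec_self_nonneg _))

variable [Fintype n]

theorem norm_gramDefect_tdMatrix_mulVec_le (hγ : 0 ≤ γ) (hα : α ∈ Set.Icc 0 2)
    (hγα : γ * (1 + α * (1 + γ)) ≤ 1) (hx : ‖toLp 2 x‖ ≤ 1) (hy : ‖toLp 2 y‖ ≤ 1) (v : n → ℝ) :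
    ‖toLp 2 (gramDefect α (tdMatrix γ x y) *ᵥ v)‖ ≤ 3 * |x ⬝ᵥ v| + 1 * |y ⬝ᵥ v| := by
  obtain ⟨hα₀, hα₂⟩ := hα
  have hγ₁ : γ ≤ 1 := le_one_of_mul_one_add_le_one hγ hα₀ hγα
  have hz : ‖toLp 2 (x - γ • y)‖ ≤ 1 + γ := by
    calc ‖toLp 2 (x - γ • y)‖ ≤ ‖toLp 2 x‖ + ‖γ • toLp 2 y‖ := norm_sub_le _ _
      _ ≤ 1 + γ * 1 := by rw [norm_smul, Real.norm_of_nonneg hγ]; gcongr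
      _ = 1 + γ := by ring
  rw [tdMatrix, gramDefect_vecMulVec_mulVec, sub_dotProduct, smul_dotProduct, smul_eq_mul,
    dotProduct_self_eq_norm_sq]
  set s := α * ‖toLp 2 x‖ ^ 2
  set a := x ⬝ᵥ v
  set b := y ⬝ᵥ v
  have hs₀ : 0 ≤ s := by positivity
  have hsα : s ≤ α := mul_le_of_le_one_right hα₀ (pow_le_one₀ (norm_nonneg _) hx)
  have hs : |1 - s| ≤ 1 := abs_le.2 ⟨by linarith, by linarith⟩
  have hza : |a - γ * b| ≤ |a| + γ * |b| := by
    simpa [abs_mul, abs_of_nonneg hγ] using abs_sub a (γ * b)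
  have hxa : |a - s * (a - γ * b)| ≤ |a| + s * γ * |b| := by
    calc |a - s * (a - γ * b)| = |(1 - s) * a + s * γ * b| := by ring_nf
      _ ≤ |1 - s| * |a| + s * γ * |b| := by
          simpa only [abs_mul, abs_of_nonneg hs₀, abs_of_nonneg hγ] using
            abs_add_le ((1 - s) * a) (s * γ * b)
      _ ≤ |a| + s * γ * |b| := by gcongr; exact mul_le_of_le_one_left (abs_nonneg a) hs
  calc ‖toLp 2 ((a - γ * b) • x + (a - s * (a - γ * b)) • (x - γ • y))‖
      ≤ |a - γ * b| * ‖toLp 2 x‖ + |a - s * (a - γ * b)| * ‖toLp 2 (x - γ • y)‖ := by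
        simpa only [WithLp.toLp_add, WithLp.toLp_smul, norm_smul, Real.norm_eq_abs] using
          norm_add_le (toLp 2 ((a - γ * b) • x)) (toLp 2 ((a - s * (a - γ * b)) • (x - γ • y)))
    _ ≤ (|a| + γ * |b|) * 1 + (|a| + s * γ * |b|) * (1 + γ) := by gcongr
    _ = (2 + γ) * |a| + γ * (1 + s * (1 + γ)) * |b| := by ring
    _ ≤ (2 + 1) * |a| + γ * (1 + α * (1 + γ)) * |b| := by gcongr
    _ ≤ (2 + 1) * |a| + 1 * |b| := by gcongr
    _ = 3 * |a| + 1 * |b| := by norm_num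

variable [DecidableEq n]

theorem l2_opNorm_gramDefect_tdMatrix_le_four (hγ : 0 ≤ γ) (hα : α ∈ Set.Icc 0 2)
    (hγα : γ * (1 + α * (1 + γ)) ≤ 1) (hx : ‖toLp 2 x‖ ≤ 1) (hy : ‖toLp 2 y‖ ≤ 1) :
    ‖gramDefect α (tdMatrix γ x y)‖ ≤ 4 := by
  have h := l2_opNorm_le_of_norm_mulVec_le zero_le_three zero_le_one
    (norm_gramDefect_tdMatrix_mulVec_le hγ hα hγα hx hy)
  linarith

theorem gramDefect_tdMatrix_pow_succ_le (hγ : 0 ≤ γ) (hα : α ∈ Set.Icc 0 2)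
    (hγα : γ * (1 + α * (1 + γ)) ≤ 1) (hx : ‖toLp 2 x‖ ≤ 1) (hy : ‖toLp 2 y‖ ≤ 1) (m : ℕ) :
    gramDefect α (tdMatrix γ x y) ^ (m + 1)
      ≤ (4 : ℝ) ^ m • ((3 : ℝ) • vecMulVec x x + vecMulVec y y) := by
  set B := gramDefect α (tdMatrix γ x y)
  have hB : B.IsHermitian := isHermitian_gramDefect α _
  cases m with
  | zero =>
    have hγ₁ : γ ≤ 1 := le_one_of_mul_one_add_le_one hγ hα.1 hγα
    simpa using (gramDefect_le_add_transpose hα.1 _).trans (tdMatrix_add_transpose_le hγ hγ₁)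
  | succ m =>
    have hsq : B ^ 2 ≤ (4 : ℝ) • ((3 : ℝ) • vecMulVec x x + vecMulVec y y) := by
      have h := sq_le_of_norm_mulVec_le hB zero_le_three zero_le_one
        (norm_gramDefect_tdMatrix_mulVec_le hγ hα hγα hx hy)
      rwa [one_smul, three_add_one_eq_four] at h
    calc B ^ (m + 2) ≤ ‖B‖ ^ m • B ^ 2 := pow_add_two_le_l2_opNorm_pow_smul_sq hB m
      _ ≤ (4 : ℝ) ^ m • B ^ 2 := by
          refine smul_le_smul_of_nonneg_right ?_ (IsSelfAdjoint.sq_nonneg hB)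
          gcongr
          exact l2_opNorm_gramDefect_tdMatrix_le_four hγ hα hγα hx hy
      _ ≤ (4 : ℝ) ^ m • (4 : ℝ) • ((3 : ℝ) • vecMulVec x x + vecMulVec y y) :=
          smul_le_smul_of_nonneg_left hsq (by positivity)
      _ = (4 : ℝ) ^ (m + 1) • ((3 : ℝ) • vecMulVec x x + vecMulVec y y) := by
          rw [smul_smul, pow_succ]

end TDMatrix

section Expectation

variable {n Ω : Type*} [Fintype n] [DecidableEq n] [MeasurableSpace Ω] {P : Measure Ω}
  {X Y : Ω → n → ℝ} {γ α : ℝ}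

theorem integrable_vecMulVec_self [IsFiniteMeasure P] (hXm : AEStronglyMeasurable X P)
    (hX : ∀ᵐ ω ∂P, ‖toLp 2 (X ω)‖ ≤ 1) : Integrable (fun ω => vecMulVec (X ω) (X ω)) P := by
  refine Integrable.of_bound (C := 1) ?_ ?_
  · have hcont : Continuous fun x : n → ℝ => vecMulVec x x := by fun_prop
    exact hcont.comp_aestronglyMeasurable hXm
  · filter_upwards [hX] with ω hω
    rw [l2_opNorm_vecMulVec]
    exact mul_le_one₀ hω (norm_nonneg _) hω

theorem integrable_gramDefect_tdMatrix_pow_succ [IsFiniteMeasure P]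
    (hXm : AEStronglyMeasurable X P) (hYm : AEStronglyMeasurable Y P)
    (hX : ∀ᵐ ω ∂P, ‖toLp 2 (X ω)‖ ≤ 1) (hY : ∀ᵐ ω ∂P, ‖toLp 2 (Y ω)‖ ≤ 1)
    (hγ : 0 ≤ γ) (hα : α ∈ Set.Icc 0 2) (hγα : γ * (1 + α * (1 + γ)) ≤ 1) (m : ℕ) :
    Integrable (fun ω => gramDefect α (tdMatrix γ (X ω) (Y ω)) ^ (m + 1)) P := by
  refine Integrable.of_bound (C := 4 ^ (m + 1)) ?_ ?_
  · have hcont : Continuous fun q : (n → ℝ) × (n → ℝ) => gramDefect α (tdMatrix γ q.1 q.2) := by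
      unfold gramDefect tdMatrix
      fun_prop
    exact (hcont.comp_aestronglyMeasurable (hXm.prodMk hYm)).pow (m + 1)
  · filter_upwards [hX, hY] with ω hx hy
    calc ‖gramDefect α (tdMatrix γ (X ω) (Y ω)) ^ (m + 1)‖
        ≤ ‖gramDefect α (tdMatrix γ (X ω) (Y ω))‖ ^ (m + 1) := norm_pow_le' _ m.add_one_pos
      _ ≤ 4 ^ (m + 1) := by
          gcongr
          exact l2_opNorm_gramDefect_tdMatrix_le_four hγ hα hγα hx hy

theorem integral_gramDefect_tdMatrix_pow_succ_le [IsFiniteMeasure P]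
    (hXm : AEStronglyMeasurable X P) (hYm : AEStronglyMeasurable Y P)
    (hX : ∀ᵐ ω ∂P, ‖toLp 2 (X ω)‖ ≤ 1) (hY : ∀ᵐ ω ∂P, ‖toLp 2 (Y ω)‖ ≤ 1)
    (hγ : 0 ≤ γ) (hα : α ∈ Set.Icc 0 2) (hγα : γ * (1 + α * (1 + γ)) ≤ 1) (m : ℕ) :
    ∫ ω, gramDefect α (tdMatrix γ (X ω) (Y ω)) ^ (m + 1) ∂P
      ≤ (4 : ℝ) ^ m • ((3 : ℝ) • ∫ ω, vecMulVec (X ω) (X ω) ∂P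
        + ∫ ω, vecMulVec (Y ω) (Y ω) ∂P) := by
  have hXX : Integrable (fun ω => (3 : ℝ) • vecMulVec (X ω) (X ω)) P :=
    (integrable_vecMulVec_self hXm hX).smul (3 : ℝ)
  have hYY := integrable_vecMulVec_self hYm hY
  rw [← integral_smul, ← integral_add hXX hYY, ← integral_smul]
  refine integral_mono_ae
    (integrable_gramDefect_tdMatrix_pow_succ hXm hYm hX hY hγ hα hγα m)
    ((hXX.add hYY).smul ((4 : ℝ) ^ m)) ?_
  filter_upwards [hX, hY] with ω hx hy
  exact gramDefect_tdMatrix_pow_succ_le hγ hα hγα hx hy m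

end Expectation

section MatExp

variable {d : ℕ} {Ω : Type*} [MeasurableSpace Ω] {P : Measure Ω}

theorem euclNorm_eq_norm (u : Fin d → ℝ) : euclNorm u = ‖toLp 2 u‖ := by
  simp [euclNorm, EuclideanSpace.norm_eq]

theorem matExp_eq_integral {M : Ω → Matrix (Fin d) (Fin d) ℝ} (hM : Integrable M P) :
    matExp P M = ∫ ω, M ω ∂P := by
  ext i j
  exact (LinearMap.toContinuousLinearMap (entryLinearMap ℝ ℝ i j)).integral_comp_comm hM

theorem matExp_vecMulVec_self_nonneg [IsFiniteMeasure P] {X : Ω → Fin d → ℝ}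
    (hXm : AEStronglyMeasurable X P) (hX : ∀ᵐ ω ∂P, euclNorm (X ω) ≤ 1) :
    0 ≤ matExp P fun ω => vecMulVec (X ω) (X ω) := by
  simp only [euclNorm_eq_norm] at hX
  rw [matExp_eq_integral (integrable_vecMulVec_self hXm hX)]
  exact integral_nonneg fun ω => vecMulVec_self_nonneg (X ω)

theorem matExp_vecMulVec_self_congr {Ω' : Type*} [MeasurableSpace Ω'] {P' : Measure Ω'}
    {X : Ω → Fin d → ℝ} {Y : Ω' → Fin d → ℝ} (hXY : IdentDistrib X Y P P') :
    matExp P (fun ω => vecMulVec (X ω) (X ω)) = matExp P' fun ω => vecMulVec (Y ω) (Y ω) := by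
  ext i j
  have hmeas : Measurable fun x : Fin d → ℝ => vecMulVec x x i j := by
    simp only [vecMulVec_apply]
    fun_prop
  exact (hXY.comp hmeas).integral_eq

end MatExp

theorem stepSize_mem_Icc_and_mul_le_one {γ α : ℝ} (hγ : 0 ≤ γ)
    (hα : α ∈ Set.Ioc 0 ((1 - γ) / (1 + γ) ^ 2)) :
    α ∈ Set.Icc 0 2 ∧ γ * (1 + α * (1 + γ)) ≤ 1 := by
  obtain ⟨hα₀, hα₁⟩ := hα
  rw [le_div_iff₀ (by positivity)] at hα₁
  have : 0 ≤ α * γ := by positivity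
  have : 0 ≤ α * γ ^ 2 := by positivity
  exact ⟨⟨hα₀.le, by nlinarith⟩, by nlinarith⟩

theorem stmt4_general {d : ℕ} {γ : ℝ} (hγ : 0 ≤ γ)
    {Ω : Type*} [MeasurableSpace Ω] {P : Measure Ω} [IsFiniteMeasure P]
    {X Y : Ω → Fin d → ℝ} (hXm : AEStronglyMeasurable X P) (hYm : AEStronglyMeasurable Y P)
    (hX : ∀ᵐ ω ∂P, euclNorm (X ω) ≤ 1) (hY : ∀ᵐ ω ∂P, euclNorm (Y ω) ≤ 1)
    (hYX : matExp P (fun ω => vecMulVec (Y ω) (Y ω)) ≤ matExp P fun ω => vecMulVec (X ω) (X ω))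
    {α : ℝ} (hα : α ∈ Set.Icc 0 2) (hγα : γ * (1 + α * (1 + γ)) ≤ 1) {p : ℕ} (hp : 1 ≤ p) :
    matExp P (fun ω => gramDefect α (tdMatrix γ (X ω) (Y ω)) ^ p)
      ≤ (4 : ℝ) ^ p • matExp P fun ω => vecMulVec (X ω) (X ω) := by
  obtain ⟨m, rfl⟩ := Nat.exists_eq_add_of_le' hp
  simp only [euclNorm_eq_norm] at hX hY
  have hXX := integrable_vecMulVec_self hXm hX
  have hYY := integrable_vecMulVec_self hYm hY
  have hB := integrable_gramDefect_tdMatrix_pow_succ hXm hYm hX hY hγ hα hγα m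
  rw [matExp_eq_integral hXX, matExp_eq_integral hYY] at hYX
  rw [matExp_eq_integral hB, matExp_eq_integral hXX]
  set S := ∫ ω, vecMulVec (X ω) (X ω) ∂P
  calc ∫ ω, gramDefect α (tdMatrix γ (X ω) (Y ω)) ^ (m + 1) ∂P
      ≤ (4 : ℝ) ^ m • ((3 : ℝ) • S + ∫ ω, vecMulVec (Y ω) (Y ω) ∂P) :=
        integral_gramDefect_tdMatrix_pow_succ_le hXm hYm hX hY hγ hα hγα m
    _ ≤ (4 : ℝ) ^ m • ((3 : ℝ) • S + S) :=
        smul_le_smul_of_nonneg_left (add_le_add_right hYX _) (by positivity)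
    _ = (4 : ℝ) ^ (m + 1) • S := by rw [pow_succ]; module

/-- Let `A = X (X - γ Y)ᵀ` and `B = A + Aᵀ - α Aᵀ A`. For every step size
`α ∈ (0, (1-γ)/(1+γ)²]` and every integer `p ≥ 1`, `E[B^p] ≼ (13/12)·4^p·Σ` in the
Loewner order, where `Σ = E[X Xᵀ]`. -/
theorem stmt4 {d : ℕ} (hd : 1 ≤ d) (γ : ℝ) (hγ : γ ∈ Set.Ico (0 : ℝ) 1)
    {Ω : Type*} [MeasurableSpace Ω] (P : Measure Ω) [IsProbabilityMeasure P]
    (X Y : Ω → Fin d → ℝ) (hXm : Measurable X) (hYm : Measurable Y)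
    (hX1 : ∀ᵐ ω ∂P, euclNorm (X ω) ≤ 1) (hY1 : ∀ᵐ ω ∂P, euclNorm (Y ω) ≤ 1)
    (hXY : IdentDistrib X Y P P)
    (α : ℝ) (hα : α ∈ Set.Ioc 0 ((1 - γ) / (1 + γ) ^ 2))
    (p : ℕ) (hp : 1 ≤ p) :
    (((13 / 12 : ℝ) * 4 ^ p) • matExp P (fun ω => vecMulVec (X ω) (X ω))
      - matExp P (fun ω =>
          (vecMulVec (X ω) (X ω - γ • Y ω) + (vecMulVec (X ω) (X ω - γ • Y ω))ᵀ
            - α • ((vecMulVec (X ω) (X ω - γ • Y ω))ᵀ * vecMulVec (X ω) (X ω - γ • Y ω))) ^ p)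
      ).PosSemidef := by
  obtain ⟨hα₂, hγα⟩ := stepSize_mem_Icc_and_mul_le_one hγ.1 hα
  have hXm' := hXm.aestronglyMeasurable (μ := P)
  calc matExp P (fun ω => gramDefect α (tdMatrix γ (X ω) (Y ω)) ^ p)
      ≤ (4 : ℝ) ^ p • matExp P (fun ω => vecMulVec (X ω) (X ω)) :=
        stmt4_general hγ.1 hXm' hYm.aestronglyMeasurable hX1 hY1
          (matExp_vecMulVec_self_congr hXY).ge hα₂ hγα hp
    _ ≤ (13 / 12 * (4 : ℝ) ^ p) • matExp P (fun ω => vecMulVec (X ω) (X ω)) :=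
        smul_le_smul_of_nonneg_right (le_mul_of_one_le_left (by positivity) (by norm_num))
          (matExp_vecMulVec_self_nonneg hXm' hX1)
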